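/- For each n ≥ 1 let 𝒫_n ⊆ C(AddCircle (2π), ℂ) be the complex vector space of trigonometric polynomials of degree at most n−1, i.e. functions of the form a(x) = Σ_{k=−n+1}^{n−1} a_k e^{ikx}, and let S(𝒫_n) be the set of linear functionals φ : 𝒫_n → ℂ with φ(1) = 1 and φ(a) ≥ 0 for every a ∈ 𝒫_n that is nonnegative as a function on the circle, equipped with the distance d_n(φ, ψ) = sup { |φ(a) − ψ(a)| : a ∈ 𝒫_n, sup_x |a′(x)| ≤ 1 }. Let P(S¹) be the set of Borel probability measures on AddCircle (2π), equipped with the Kantorovich distance d(μ, ν) = sup { |∫ f dμ − ∫ f dν| : f 1-Lipschitz for the arc-length metric }. Then each (S(𝒫_n), d_n) is a nonempty compact metric space, and (S(𝒫_n), d_n) converges to (P(S¹), d) in Gromov–Hausdorff distance as n → ∞. -/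

import Mathlib

open MeasureTheory Filter
open scoped ComplexOrder

instance : Fact (0 < 2 * Real.pi) := ⟨by positivity⟩

/-- The Fejér–Riesz operator system `𝒫_n`: trigonometric polynomials of degree at most `n − 1`
on the circle, i.e. the span of the Fourier modes `e^{ikx}` with `|k| ≤ n − 1`. -/
noncomputable def fejerRieszSubmodule (n : ℕ) :
    Submodule ℂ C(AddCircle (2 * Real.pi), ℂ) :=
  Submodule.span ℂ {g : C(AddCircle (2 * Real.pi), ℂ) |
    ∃ k : ℤ, |k| ≤ (n : ℤ) - 1 ∧ g = fourier k}

lemma one_mem_fejerRieszSubmodule (n : ℕ) :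
    (1 : C(AddCircle (2 * Real.pi), ℂ)) ∈ fejerRieszSubmodule (n + 1) := by
  apply Submodule.subset_span
  refine ⟨0, by simp, ?_⟩
  ext x
  simp

/-- The constant function `1`, as an element of the Fejér–Riesz operator system `𝒫_{n+1}`. -/
noncomputable def fejerRieszOne (n : ℕ) : fejerRieszSubmodule (n + 1) :=
  ⟨1, one_mem_fejerRieszSubmodule n⟩

/-- A state on `𝒫_{n+1}`: a linear functional `φ` with `φ(1) = 1` which is nonnegative on
elements that are nonnegative as functions on the circle. -/
noncomputable def FejerRieszState (n : ℕ) : Type :=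
  {φ : fejerRieszSubmodule (n + 1) →ₗ[ℂ] ℂ //
    φ (fejerRieszOne n) = 1 ∧
    ∀ a : fejerRieszSubmodule (n + 1),
      (∀ x : AddCircle (2 * Real.pi), 0 ≤ (a : C(AddCircle (2 * Real.pi), ℂ)) x) →
      0 ≤ φ a}

/-- The Lipschitz seminorm `sup_x |a′(x)|` of a trigonometric polynomial. -/
noncomputable def trigLipSeminorm {n : ℕ} (a : fejerRieszSubmodule n) : ℝ :=
  ⨆ x : ℝ, ‖deriv
    (fun y : ℝ => (a : C(AddCircle (2 * Real.pi), ℂ)) ((y : ℝ) : AddCircle (2 * Real.pi))) x‖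

/-- Connes' distance on the state space of `𝒫_{n+1}`:
`d_n(φ, ψ) = sup { |φ(a) − ψ(a)| : a ∈ 𝒫_{n+1}, sup_x |a′(x)| ≤ 1 }`. -/
noncomputable def fejerRieszStateDist (n : ℕ) (φ ψ : FejerRieszState n) : ℝ :=
  sSup {r : ℝ | ∃ a : fejerRieszSubmodule (n + 1),
    trigLipSeminorm a ≤ 1 ∧ r = ‖φ.1 a - ψ.1 a‖}

/-- The Kantorovich distance on Borel probability measures on the circle:
`d(μ, ν) = sup { |∫ f dμ − ∫ f dν| : f 1-Lipschitz }`. -/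
noncomputable def kantorovichDist
    (μ ν : ProbabilityMeasure (AddCircle (2 * Real.pi))) : ℝ :=
  sSup {r : ℝ | ∃ f : AddCircle (2 * Real.pi) → ℝ, LipschitzWith 1 f ∧
    r = |(∫ x, f x ∂(μ : Measure (AddCircle (2 * Real.pi))))
        - ∫ x, f x ∂(ν : Measure (AddCircle (2 * Real.pi)))|}

/-!
Every state of `𝒫_n` is integration against a probability measure: extend it to a positive
functional on continuous functions by the Riesz extension theorem and represent the extension by
the Riesz–Markov–Kakutani theorem. Hence restriction `P(S¹) → S(𝒫_n)` is onto, and it is 1-Lipschitz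
because a trigonometric polynomial with `sup |a′| ≤ 1` is a 1-Lipschitz function on the circle.

Conversely, convolving a 1-Lipschitz function with the normalized kernel `(1 + cos x) ^ n` yields
a 1-Lipschitz trigonometric polynomial at uniform distance at most `ε_n`, the first moment of the
kernel. Restriction therefore shrinks distances by at most `2 ε_n`, so the Gromov–Hausdorff
distance is at most `ε_n`, and `ε_n → 0` because the kernels concentrate at `0`.
-/

open scoped Topology NNReal BoundedContinuousFunction

section MetricSpace

theorem eq_induced_of_injective_of_tendsto_dist {X Y : Type*} [t : TopologicalSpace X]
    [CompactSpace X] [m : MetricSpace Y] {f : X → Y} (hinj : Function.Injective f)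
    (h : ∀ x, Tendsto (fun x' => dist (f x') (f x)) (𝓝 x) (𝓝 0)) :
    t = .induced f m.toUniformSpace.toTopologicalSpace :=
  (Continuous.isClosedEmbedding
    (continuous_iff_continuousAt.2 fun x => tendsto_iff_dist_tendsto_zero.2 (h x))
      hinj).isInducing.eq_induced

end MetricSpace

section GromovHausdorff

variable {X Y : Type*} [MetricSpace X] [CompactSpace X] [Nonempty X]
  [MetricSpace Y] [CompactSpace Y] [Nonempty Y]

theorem ghDist_le_half_of_surjective {R : X → Y} (hR : Function.Surjective R) {δ : ℝ}
    (h : ∀ x x', |dist x x' - dist (R x) (R x')| ≤ δ) : GromovHausdorff.ghDist Y X ≤ δ / 2 := by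
  have key : GromovHausdorff.ghDist X Y ≤ 0 + δ / 2 + 0 :=
    GromovHausdorff.ghDist_le_of_approx_subsets (s := Set.univ) (fun x => R x)
      (fun x => ⟨x, trivial, (dist_self x).le⟩)
      (fun y => (hR y).imp' (fun x => ⟨x, trivial⟩) fun x hx => by simp [hx])
      fun x x' => h x x'
  rwa [zero_add, add_zero, GromovHausdorff.ghDist, dist_comm] at key

end GromovHausdorff

section Integral

variable {X E : Type*} [TopologicalSpace X] [CompactSpace X] [MeasurableSpace X]
  [OpensMeasurableSpace X] [NormedAddCommGroup E]

theorem integrable_of_continuous {f : X → E} (hf : Continuous f) (μ : Measure X)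
    [IsFiniteMeasure μ] : Integrable f μ :=
  hf.integrable_of_hasCompactSupport (.of_compactSpace f)

theorem norm_integral_sub_integral_le [NormedSpace ℝ E] {f g : X → E} (hf : Continuous f)
    (hg : Continuous g) (μ : Measure X) [IsProbabilityMeasure μ] {C : ℝ}
    (h : ∀ x, ‖f x - g x‖ ≤ C) : ‖(∫ x, f x ∂μ) - ∫ x, g x ∂μ‖ ≤ C := by
  rw [← integral_sub (integrable_of_continuous hf μ) (integrable_of_continuous hg μ)]
  simpa using norm_integral_le_of_norm_le_const (μ := μ) (Eventually.of_forall h)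

end Integral

section LipschitzIntegral

theorem continuous_integral_probabilityMeasure_prod (X : Type*) [TopologicalSpace X]
    [MeasurableSpace X] [OpensMeasurableSpace X] :
    Continuous fun p : ProbabilityMeasure X × (X →ᵇ ℝ) => ∫ x, p.2 x ∂(p.1 : Measure X) := by
  refine continuous_prod_of_continuous_lipschitzWith' _ 1 (fun μ => ?_)
    fun f => ProbabilityMeasure.continuous_integral_boundedContinuousFunction f
  refine LipschitzWith.of_dist_le_mul fun f g => ?_
  rw [NNReal.coe_one, one_mul, dist_eq_norm, dist_eq_norm,
    ← integral_sub (f.integrable _) (g.integrable _)]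
  simpa using (f - g).norm_integral_le_norm (μ : Measure X)

variable {X : Type*} [PseudoMetricSpace X] [CompactSpace X]

theorem isCompact_setOf_lipschitzWith_apply_eq_zero (K : ℝ≥0) (x₀ : X) :
    IsCompact {f : X →ᵇ ℝ | LipschitzWith K f ∧ f x₀ = 0} := by
  refine BoundedContinuousFunction.arzela_ascoli₂
    (Metric.closedBall 0 (K * Metric.diam (Set.univ : Set X))) (isCompact_closedBall _ _) _ ?_
    (fun f x hf => ?_)
    (LipschitzWith.uniformEquicontinuous _ K fun f :
      {f : X →ᵇ ℝ | LipschitzWith K f ∧ f x₀ = 0} => f.2.1).equicontinuous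
  · have hlip : IsClosed {f : X →ᵇ ℝ | LipschitzWith K f} :=
      (isClosed_setOfPred_lipschitzWith (α := X) (β := ℝ) K).preimage
        BoundedContinuousFunction.continuous_coe
    exact hlip.inter (isClosed_eq (continuous_eval_const x₀) continuous_const)
  · rw [Metric.mem_closedBall, ← hf.2]
    refine (hf.1.dist_le_mul x x₀).trans ?_
    gcongr
    exact Metric.dist_le_diam_of_mem isCompact_univ.isBounded trivial trivial

variable [MeasurableSpace X] [OpensMeasurableSpace X]

theorem eventually_forall_lipschitzWith_abs_integral_sub_lt (K : ℝ≥0) (μ : ProbabilityMeasure X)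
    {ε : ℝ} (hε : 0 < ε) : ∀ᶠ ν : ProbabilityMeasure X in 𝓝 μ, ∀ f : X → ℝ, LipschitzWith K f →
      |(∫ x, f x ∂(ν : Measure X)) - ∫ x, f x ∂(μ : Measure X)| < ε := by
  obtain ⟨x₀⟩ := nonempty_of_isProbabilityMeasure (μ : Measure X)
  have hcont : Continuous fun p : ProbabilityMeasure X × (X →ᵇ ℝ) =>
      |(∫ x, p.2 x ∂(p.1 : Measure X)) - ∫ x, p.2 x ∂(μ : Measure X)| :=
    ((continuous_integral_probabilityMeasure_prod X).sub
      ((continuous_integral_probabilityMeasure_prod X).comp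
        (continuous_const.prodMk continuous_snd))).abs
  have hK : ∀ᶠ ν : ProbabilityMeasure X in 𝓝 μ, ∀ f ∈ {f : X →ᵇ ℝ | LipschitzWith K f ∧ f x₀ = 0},
      |(∫ x, f x ∂(ν : Measure X)) - ∫ x, f x ∂(μ : Measure X)| < ε :=
    (isCompact_setOf_lipschitzWith_apply_eq_zero K x₀).eventually_forall_of_forall_eventually
      fun f _ => (hcont.tendsto (μ, f)).eventually_lt_const (by simpa using hε)
  filter_upwards [hK] with ν hν f hf
  have hf₀ : LipschitzWith K fun x => f x - f x₀ :=
    .of_dist_le_mul fun x y => by simpa using hf.dist_le_mul x y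
  have := hν (.mkOfCompact ⟨_, hf₀.continuous⟩) ⟨hf₀, sub_self _⟩
  have hsub (ρ : ProbabilityMeasure X) :
      ∫ x, (f x - f x₀) ∂(ρ : Measure X) = (∫ x, f x ∂(ρ : Measure X)) - f x₀ := by
    rw [integral_sub (integrable_of_continuous hf.continuous _) (integrable_const _)]
    simp
  simpa [hsub] using this

theorem norm_integral_sub_integral_le_of_lipschitzWith {E : Type*} [NormedAddCommGroup E]
    [NormedSpace ℝ E] [CompleteSpace E] {f : X → E} {K : ℝ≥0} (hf : LipschitzWith K f)
    (μ ν : ProbabilityMeasure X) :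
    ‖(∫ x, f x ∂(μ : Measure X)) - ∫ x, f x ∂(ν : Measure X)‖ ≤
      2 * (K * Metric.diam (Set.univ : Set X)) := by
  obtain ⟨x₀⟩ := nonempty_of_isProbabilityMeasure (μ : Measure X)
  have key (ρ : ProbabilityMeasure X) :
      ‖(∫ x, f x ∂(ρ : Measure X)) - f x₀‖ ≤ K * Metric.diam (Set.univ : Set X) := by
    simpa using norm_integral_sub_integral_le hf.continuous (g := fun _ => f x₀)
      continuous_const (ρ : Measure X) fun x =>
        (dist_eq_norm (f x) (f x₀) ▸ hf.dist_le_mul x x₀).trans <| by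
        gcongr
        exact Metric.dist_le_diam_of_mem isCompact_univ.isBounded trivial trivial
  calc ‖(∫ x, f x ∂(μ : Measure X)) - ∫ x, f x ∂(ν : Measure X)‖
      = ‖((∫ x, f x ∂(μ : Measure X)) - f x₀) - ((∫ x, f x ∂(ν : Measure X)) - f x₀)‖ := by
        rw [sub_sub_sub_cancel_right]
    _ ≤ K * Metric.diam (Set.univ : Set X) + K * Metric.diam (Set.univ : Set X) :=
        norm_sub_le_of_le (key μ) (key ν)
    _ = 2 * (K * Metric.diam (Set.univ : Set X)) := (two_mul _).symm

end LipschitzIntegral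

section LipschitzWith

variable {X : Type*} [PseudoEMetricSpace X]

theorem exists_lipschitzWith_one_const_smul (𝕜 : Type*) {E : Type*} [NontriviallyNormedField 𝕜]
    [SeminormedAddCommGroup E] [NormedSpace 𝕜 E] {f : X → E} {K : ℝ≥0} (hf : LipschitzWith K f) :
    ∃ c : 𝕜, c ≠ 0 ∧ LipschitzWith 1 (c • f) := by
  obtain ⟨c, hc₀, hc⟩ := NormedField.exists_norm_lt 𝕜 (r := (K + 1 : ℝ)⁻¹) (by positivity)
  refine ⟨c, norm_pos_iff.1 hc₀, ((lipschitzWith_smul c).comp hf).weaken ?_⟩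
  rw [← NNReal.coe_le_coe, NNReal.coe_mul, coe_nnnorm, NNReal.coe_one]
  calc ‖c‖ * K ≤ (K + 1 : ℝ)⁻¹ * (K + 1) := by gcongr; linarith
    _ = 1 := inv_mul_cancel₀ (by positivity)

theorem probabilityMeasure_ext_of_lipschitzWith_one [MeasurableSpace X] [BorelSpace X]
    {μ ν : ProbabilityMeasure X}
    (h : ∀ f : X → ℝ, LipschitzWith 1 f →
      ∫ x, f x ∂(μ : Measure X) = ∫ x, f x ∂(ν : Measure X)) : μ = ν := by
  have hlim : Tendsto (fun _ : ℕ => μ) atTop (𝓝 ν) := by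
    refine tendsto_iff_forall_lipschitz_integral_tendsto.2 fun f _ ⟨K, hf⟩ => ?_
    obtain ⟨c, hc, hcf⟩ := exists_lipschitzWith_one_const_smul ℝ hf
    have : ∫ x, f x ∂(μ : Measure X) = ∫ x, f x ∂(ν : Measure X) := by
      simpa [integral_const_mul, hc] using h _ hcf
    simp [this]
  exact tendsto_nhds_unique tendsto_const_nhds hlim

theorem lipschitzWith_comp_quotientAddGroup_mk_iff {G E : Type*} [SeminormedAddCommGroup G]
    {S : AddSubgroup G} [PseudoMetricSpace E] {f : G ⧸ S → E} {K : ℝ≥0} :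
    LipschitzWith K (fun x : G => f x) ↔ LipschitzWith K f := by
  refine ⟨fun h => .of_dist_le_mul fun x y => ?_, fun h => .of_dist_le_mul fun x y => ?_⟩
  · obtain ⟨y, rfl⟩ := QuotientAddGroup.mk_surjective y
    have key (ε : ℝ) (hε : 0 < ε) : dist (f x) (f y) ≤ K * (dist x (y : G ⧸ S) + ε) := by
      obtain ⟨w, hw, hwε⟩ := QuotientAddGroup.exists_norm_mk_lt (x - (y : G ⧸ S)) hε
      have hx : ((w + y : G) : G ⧸ S) = x := by
        rw [QuotientAddGroup.mk_add, hw, sub_add_cancel]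
      calc dist (f x) (f y) = dist (f (w + y : G)) (f y) := by rw [hx]
        _ ≤ K * dist (w + y) y := h.dist_le_mul _ _
        _ ≤ K * (dist x (y : G ⧸ S) + ε) := by
            gcongr
            rw [dist_eq_norm, dist_eq_norm, add_sub_cancel_right]
            exact hwε.le
    have hlim : Tendsto (fun ε => K * (dist x (y : G ⧸ S) + ε)) (𝓝[>] 0)
        (𝓝 (K * (dist x (y : G ⧸ S) + 0))) :=
      tendsto_nhdsWithin_of_tendsto_nhds (Continuous.tendsto (by fun_prop) 0)
    simpa using ge_of_tendsto hlim (eventually_mem_nhdsWithin.mono key)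
  · refine (h.dist_le_mul _ _).trans ?_
    gcongr
    rw [dist_eq_norm, dist_eq_norm, ← QuotientAddGroup.mk_sub]
    exact QuotientAddGroup.norm_mk_le_norm

theorem iSup_norm_deriv_le_iff_lipschitzWith {E : Type*} [NormedAddCommGroup E] [NormedSpace ℝ E]
    {f : ℝ → E} (hf : Differentiable ℝ f) {L : ℝ≥0} (hL : LipschitzWith L f) {K : ℝ≥0} :
    ⨆ x, ‖deriv f x‖ ≤ K ↔ LipschitzWith K f := by
  have hbdd : BddAbove (Set.range fun x => ‖deriv f x‖) :=
    ⟨L, Set.forall_mem_range.2 fun _ => norm_deriv_le_of_lipschitz hL⟩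
  exact ⟨fun h => lipschitzWith_of_nnnorm_deriv_le hf fun x => (le_ciSup hbdd x).trans h,
    fun h => ciSup_le fun _ => norm_deriv_le_of_lipschitz h⟩

end LipschitzWith

section Convolution

variable {G E : Type*} [SeminormedAddCommGroup G] [CompactSpace G] [MeasurableSpace G]
  [OpensMeasurableSpace G] [NormedAddCommGroup E] [NormedSpace ℝ E] {f : G → E} {K : ℝ≥0}

theorem lipschitzWith_integral_comp_sub (hf : LipschitzWith K f) (μ : Measure G)
    [IsProbabilityMeasure μ] : LipschitzWith K fun x => ∫ t, f (x - t) ∂μ := by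
  have hfc := hf.continuous
  refine .of_dist_le_mul fun x y => ?_
  rw [dist_eq_norm]
  refine norm_integral_sub_integral_le (by fun_prop) (by fun_prop) μ fun t => ?_
  simpa [dist_eq_norm] using hf.dist_le_mul (x - t) (y - t)

theorem norm_integral_comp_sub_sub_le [CompleteSpace E] (hf : LipschitzWith K f) (μ : Measure G)
    [IsProbabilityMeasure μ] (x : G) : ‖(∫ t, f (x - t) ∂μ) - f x‖ ≤ K * ∫ t, ‖t‖ ∂μ := by
  have hfc := hf.continuous
  calc ‖(∫ t, f (x - t) ∂μ) - f x‖ = ‖∫ t, (f (x - t) - f x) ∂μ‖ := by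
        rw [integral_sub (integrable_of_continuous (by fun_prop) μ) (integrable_const _)]
        simp
    _ ≤ ∫ t, K * ‖t‖ ∂μ :=
        norm_integral_le_of_norm_le (integrable_of_continuous (by fun_prop) μ) <| .of_forall
          fun t => by simpa [dist_eq_norm] using hf.dist_le_mul (x - t) x
    _ = K * ∫ t, ‖t‖ ∂μ := integral_const_mul _ _

end Convolution

section StateRepresentation

variable {X : Type*} [TopologicalSpace X] [CompactSpace X]

theorem exists_positiveLinearMap_extension (F : C(X, ℝ) →ₗ.[ℝ] ℝ) (h₁ : 1 ∈ F.domain)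
    (hF : ∀ f : F.domain, (∀ x, 0 ≤ (f : C(X, ℝ)) x) → 0 ≤ F f) :
    ∃ Λ : C(X, ℝ) →ₚ[ℝ] ℝ, ∀ f : F.domain, Λ f = F f := by
  obtain ⟨Λ, hΛF, hΛ⟩ := riesz_extension (PointedCone.positive ℝ C(X, ℝ)) F (fun f hf => hF f hf)
    fun f => ⟨⟨‖f‖ • 1, F.domain.smul_mem _ h₁⟩, fun x => by
      simpa [neg_le_iff_add_nonneg'] using (abs_le.1 (f.norm_coe_le_norm x)).1⟩
  exact ⟨.mk₀ Λ hΛ, hΛF⟩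

variable [T2Space X] [MeasurableSpace X] [BorelSpace X]

theorem exists_probabilityMeasure_forall_integral_eq (Λ : C(X, ℝ) →ₚ[ℝ] ℝ) (h₁ : Λ 1 = 1) :
    ∃ μ : ProbabilityMeasure X, ∀ f : C(X, ℝ), ∫ x, f x ∂(μ : Measure X) = Λ f := by
  let Λc : CompactlySupportedContinuousMap X ℝ →ₚ[ℝ] ℝ := .mk₀
    { toFun f := Λ f.toContinuousMap
      map_add' f g := map_add Λ f.toContinuousMap g.toContinuousMap
      map_smul' c f := map_smul Λ c f.toContinuousMap }
    fun _ hf => map_nonneg Λ hf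
  have hint (f : C(X, ℝ)) : ∫ x, f x ∂(RealRMK.rieszMeasure Λc) = Λ f :=
    RealRMK.integral_rieszMeasure Λc (CompactlySupportedContinuousMap.continuousMapEquiv f)
  have hmass : (RealRMK.rieszMeasure Λc).real Set.univ = 1 := by simpa [h₁] using hint 1
  exact ⟨⟨RealRMK.rieszMeasure Λc, ⟨(ENNReal.toReal_eq_one_iff _).1 hmass⟩⟩, hint⟩

end StateRepresentation

section ComplexStateRepresentation

variable {X : Type*} [TopologicalSpace X]

/-- A real-valued continuous function, regarded as a complex-valued one. -/
noncomputable def complexify : C(X, ℝ) →ₐ[ℝ] C(X, ℂ) :=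
  Complex.ofRealAm.compLeftContinuous ℝ Complex.continuous_ofReal

theorem complexify_apply (f : C(X, ℝ)) (x : X) : complexify f x = f x := rfl

variable {E : Submodule ℂ C(X, ℂ)}

theorem exists_eq_complexify_add_I_smul_complexify (hE : ∀ a ∈ E, star a ∈ E) {a : C(X, ℂ)}
    (ha : a ∈ E) : ∃ f g : C(X, ℝ), complexify f ∈ E ∧ complexify g ∈ E ∧
      a = complexify f + Complex.I • complexify g := by
  refine ⟨⟨fun x => (a x).re, by fun_prop⟩, ⟨fun x => (a x).im, by fun_prop⟩, ?_, ?_, ?_⟩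
  · convert E.smul_mem (1 / 2) (add_mem ha (hE a ha))
    ext x
    simp [complexify_apply, Complex.re_eq_add_conj, div_eq_inv_mul, mul_add]
  · convert E.smul_mem (1 / (2 * Complex.I)) (sub_mem ha (hE a ha))
    ext x
    simp only [complexify_apply, ContinuousMap.coe_mk, Complex.im_eq_sub_conj, div_eq_inv_mul]
    simp
  · ext x
    simpa [complexify_apply, mul_comm] using (Complex.re_add_im (a x)).symm

/-- The real part of a functional on a space of complex functions, as a partially defined
functional on the real functions that lie in that space. -/
noncomputable def reFunctional (φ : E →ₗ[ℂ] ℂ) : C(X, ℝ) →ₗ.[ℝ] ℝ where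
  domain := (E.restrictScalars ℝ).comap complexify.toLinearMap
  toFun := Complex.reLm ∘ₗ φ.restrictScalars ℝ ∘ₗ
    complexify.toLinearMap.submoduleComap (E.restrictScalars ℝ)

variable [CompactSpace X]

theorem im_apply_complexify_eq_zero (h₁ : 1 ∈ E) {φ : E →ₗ[ℂ] ℂ} (hφ₁ : φ ⟨1, h₁⟩ = 1)
    (hφ : ∀ a : E, (∀ x, 0 ≤ (a : C(X, ℂ)) x) → 0 ≤ φ a) {f : C(X, ℝ)}
    (hf : complexify f ∈ E) : (φ ⟨complexify f, hf⟩).im = 0 := by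
  have hpos : 0 ≤ φ (⟨complexify f, hf⟩ + (‖f‖ : ℂ) • ⟨1, h₁⟩) := hφ _ fun x => by
    have : 0 ≤ f x + ‖f‖ := neg_le_iff_add_nonneg.1 (abs_le.1 (f.norm_coe_le_norm x)).1
    simpa [complexify_apply] using mod_cast this
  rw [map_add, map_smul, hφ₁] at hpos
  simpa using (Complex.nonneg_iff.1 hpos).2.symm

theorem exists_probabilityMeasure_forall_mem_integral_eq [T2Space X] [MeasurableSpace X]
    [BorelSpace X] (h₁ : 1 ∈ E) (hE : ∀ a ∈ E, star a ∈ E) {φ : E →ₗ[ℂ] ℂ}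
    (hφ₁ : φ ⟨1, h₁⟩ = 1) (hφ : ∀ a : E, (∀ x, 0 ≤ (a : C(X, ℂ)) x) → 0 ≤ φ a) :
    ∃ μ : ProbabilityMeasure X, ∀ a : E, ∫ x, (a : C(X, ℂ)) x ∂(μ : Measure X) = φ a := by
  have h₁' : 1 ∈ (reFunctional φ).domain := by simpa [reFunctional] using h₁
  obtain ⟨Λ, hΛ⟩ := exists_positiveLinearMap_extension (reFunctional φ) h₁' fun f hf =>
    (Complex.nonneg_iff.1 (hφ ⟨complexify f, f.2⟩ fun x => Complex.zero_le_real.2 (hf x))).1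
  have hΛ₁ : Λ 1 = 1 := (hΛ ⟨1, h₁'⟩).trans <| by
    change (φ ⟨complexify 1, _⟩).re = 1
    simp [hφ₁]
  obtain ⟨μ, hμ⟩ := exists_probabilityMeasure_forall_integral_eq Λ hΛ₁
  have hreal (f : C(X, ℝ)) (hf : complexify f ∈ E) :
      ∫ x, complexify f x ∂(μ : Measure X) = φ ⟨complexify f, hf⟩ := by
    simp_rw [complexify_apply]
    rw [integral_complex_ofReal, hμ, hΛ ⟨f, hf⟩]
    exact Complex.ext rfl (im_apply_complexify_eq_zero h₁ hφ₁ hφ hf).symm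
  refine ⟨μ, fun ⟨a, ha⟩ => ?_⟩
  obtain ⟨f, g, hf, hg, rfl⟩ := exists_eq_complexify_add_I_smul_complexify hE ha
  calc ∫ x, (complexify f + Complex.I • complexify g) x ∂(μ : Measure X)
      = ∫ x, complexify f x ∂(μ : Measure X)
          + Complex.I • ∫ x, complexify g x ∂(μ : Measure X) := by
        rw [← integral_smul]
        exact integral_add (integrable_of_continuous (by fun_prop) _)
          (integrable_of_continuous (by fun_prop) _)
    _ = φ (⟨complexify f, hf⟩ + Complex.I • ⟨complexify g, hg⟩) := by
        rw [hreal f hf, hreal g hg, map_add, map_smul]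

end ComplexStateRepresentation

local notation "𝕋" => AddCircle (2 * Real.pi)

section TrigonometricPolynomials

variable {n : ℕ} {a : C(𝕋, ℂ)}

theorem fourier_mem_fejerRieszSubmodule {k : ℤ} (hk : |k| ≤ (n : ℤ) - 1) :
    fourier k ∈ fejerRieszSubmodule n :=
  Submodule.subset_span ⟨k, hk, rfl⟩

theorem star_mem_fejerRieszSubmodule (ha : a ∈ fejerRieszSubmodule n) :
    star a ∈ fejerRieszSubmodule n := by
  induction ha using Submodule.span_induction with
  | mem _ hk =>
    obtain ⟨k, hk, rfl⟩ := hk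
    convert fourier_mem_fejerRieszSubmodule (k := -k) (by rwa [abs_neg])
    ext x
    exact fourier_neg.symm
  | zero => simp
  | add _ _ _ _ hf hg => rw [star_add]; exact add_mem hf hg
  | smul c _ _ hf => rw [star_smul]; exact Submodule.smul_mem _ _ hf

theorem differentiable_of_mem_fejerRieszSubmodule (ha : a ∈ fejerRieszSubmodule n) :
    Differentiable ℝ fun x : ℝ => a x := by
  induction ha using Submodule.span_induction with
  | mem _ hk =>
    obtain ⟨k, -, rfl⟩ := hk
    exact fun x => (hasDerivAt_fourier _ k x).differentiableAt
  | zero => exact differentiable_const 0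
  | add _ _ _ _ hf hg => exact hf.add hg
  | smul c _ _ hf => exact hf.const_smul c

theorem exists_lipschitzWith_of_mem_fejerRieszSubmodule (ha : a ∈ fejerRieszSubmodule n) :
    ∃ K, LipschitzWith K a := by
  induction ha using Submodule.span_induction with
  | mem _ hk =>
    obtain ⟨k, -, rfl⟩ := hk
    refine ⟨‖2 * Real.pi * Complex.I * k / (2 * Real.pi : ℝ)‖₊,
      lipschitzWith_comp_quotientAddGroup_mk_iff.1 <| lipschitzWith_of_nnnorm_deriv_le
        (fun x => (hasDerivAt_fourier _ k x).differentiableAt) fun x => ?_⟩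
    rw [(hasDerivAt_fourier _ k x).deriv, nnnorm_mul, fourier_apply,
      show ‖((_ : Circle) : ℂ)‖₊ = 1 from NNReal.eq (Circle.norm_coe _), mul_one]
  | zero => exact ⟨0, .const 0⟩
  | add _ _ _ _ hf hg =>
    obtain ⟨⟨K, hf⟩, L, hg⟩ := hf, hg
    exact ⟨K + L, hf.add hg⟩
  | smul c _ _ hf =>
    obtain ⟨K, hf⟩ := hf
    exact ⟨‖c‖₊ * K, (lipschitzWith_smul c).comp hf⟩

theorem trigLipSeminorm_le_one_iff (a : fejerRieszSubmodule n) :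
    trigLipSeminorm a ≤ 1 ↔ LipschitzWith 1 (a : C(𝕋, ℂ)) := by
  obtain ⟨L, hL⟩ := exists_lipschitzWith_of_mem_fejerRieszSubmodule a.2
  rw [trigLipSeminorm, ← NNReal.coe_one, iSup_norm_deriv_le_iff_lipschitzWith
    (differentiable_of_mem_fejerRieszSubmodule a.2)
    (lipschitzWith_comp_quotientAddGroup_mk_iff.2 hL),
    lipschitzWith_comp_quotientAddGroup_mk_iff]

theorem mul_mem_fejerRieszSubmodule {m : ℕ} {b : C(𝕋, ℂ)} (ha : a ∈ fejerRieszSubmodule (m + 1))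
    (hb : b ∈ fejerRieszSubmodule (n + 1)) : a * b ∈ fejerRieszSubmodule (m + n + 1) := by
  suffices fejerRieszSubmodule (m + 1) * fejerRieszSubmodule (n + 1) ≤
    fejerRieszSubmodule (m + n + 1) from this (Submodule.mul_mem_mul ha hb)
  rw [fejerRieszSubmodule, fejerRieszSubmodule, Submodule.span_mul_span, Submodule.span_le]
  rintro _ ⟨_, ⟨j, hj, rfl⟩, _, ⟨k, hk, rfl⟩, rfl⟩
  have hjk : fourier j * fourier k = (fourier (j + k) : C(𝕋, ℂ)) :=
    ContinuousMap.ext fun _ => fourier_add.symm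
  beta_reduce
  refine hjk ▸ fourier_mem_fejerRieszSubmodule ?_
  push_cast at *
  linarith [abs_add_le j k]

theorem pow_mem_fejerRieszSubmodule (ha : a ∈ fejerRieszSubmodule 2) (n : ℕ) :
    a ^ n ∈ fejerRieszSubmodule (n + 1) := by
  induction n with
  | zero => simpa using one_mem_fejerRieszSubmodule 0
  | succ n ih => exact pow_succ a n ▸ mul_mem_fejerRieszSubmodule ih ha

theorem exists_mem_fejerRieszSubmodule_convolution (ha : a ∈ fejerRieszSubmodule n) {f : 𝕋 → ℂ}
    (hf : Continuous f) (μ : Measure 𝕋) [IsFiniteMeasure μ] :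
    ∃ b ∈ fejerRieszSubmodule n, ∀ x, b x = ∫ t, a (x - t) * f t ∂μ := by
  induction ha using Submodule.span_induction with
  | mem _ hk =>
    obtain ⟨k, hk, rfl⟩ := hk
    refine ⟨(∫ t, fourier (-k) t * f t ∂μ) • fourier k,
      Submodule.smul_mem _ _ (fourier_mem_fejerRieszSubmodule hk), fun x => ?_⟩
    have hsub (t : 𝕋) : fourier k (x - t) = fourier k x * fourier (-k) t := by
      simp only [fourier_apply, sub_eq_add_neg, smul_add, AddCircle.toCircle_add, neg_smul,
        smul_neg, Circle.coe_mul]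
    simp_rw [hsub, mul_assoc, integral_const_mul, ContinuousMap.smul_apply, smul_eq_mul, mul_comm]
  | zero => exact ⟨0, zero_mem _, by simp⟩
  | add a₁ a₂ _ _ ih₁ ih₂ =>
    obtain ⟨b₁, hb₁, hb₁'⟩ := ih₁
    obtain ⟨b₂, hb₂, hb₂'⟩ := ih₂
    refine ⟨b₁ + b₂, add_mem hb₁ hb₂, fun x => ?_⟩
    simp_rw [ContinuousMap.add_apply, add_mul]
    rw [hb₁', hb₂', integral_add (integrable_of_continuous (by fun_prop) μ)
      (integrable_of_continuous (by fun_prop) μ)]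
  | smul c _ _ ih =>
    obtain ⟨b, hb, hb'⟩ := ih
    refine ⟨c • b, Submodule.smul_mem _ _ hb, fun x => ?_⟩
    simp_rw [ContinuousMap.smul_apply, smul_eq_mul, mul_assoc, integral_const_mul, hb']

end TrigonometricPolynomials

section DeLaValleePoussin

open AddCircle (haarAddCircle)

/-- The function `1 + cos x` on the circle. -/
noncomputable def onePlusCos : C(𝕋, ℝ) := ⟨fun x => 1 + (fourier 1 x : ℂ).re, by fun_prop⟩

theorem onePlusCos_apply (x : 𝕋) : onePlusCos x = 1 + (fourier 1 x : ℂ).re := rfl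

theorem onePlusCos_nonneg (x : 𝕋) : 0 ≤ onePlusCos x := by
  have := (abs_le.1 (Complex.abs_re_le_norm (fourier 1 x))).1
  rw [fourier_apply, Circle.norm_coe] at this
  rw [onePlusCos_apply, fourier_apply]
  linarith

theorem onePlusCos_zero : onePlusCos 0 = 2 := by
  rw [onePlusCos_apply, fourier_eval_zero, Complex.one_re, one_add_one_eq_two]

theorem onePlusCos_lt_onePlusCos_zero {x : 𝕋} (hx : x ≠ 0) : onePlusCos x < onePlusCos 0 := by
  have hnorm : ‖fourier 1 x‖ = 1 := Circle.norm_coe _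
  have hle := Complex.re_le_norm (fourier 1 x)
  rw [onePlusCos_zero, onePlusCos_apply]
  refine lt_of_le_of_ne (by linarith) fun h => hx ?_
  have hre : (fourier 1 x : ℂ).re = ‖fourier 1 x‖ := by linarith
  have hone : fourier 1 x = 1 := by
    rw [Complex.eq_re_of_ofReal_le (Complex.re_eq_norm.1 hre), hre, hnorm, Complex.ofReal_one]
  refine AddCircle.injective_toCircle (by positivity) (Circle.ext ?_)
  rwa [fourier_one, ← Circle.coe_one, ← AddCircle.toCircle_zero] at hone

theorem complexify_onePlusCos_mem : complexify onePlusCos ∈ fejerRieszSubmodule 2 := by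
  have h : complexify onePlusCos = 1 + (1 / 2 : ℂ) • (fourier 1 + fourier (-1)) := by
    ext x
    have hneg : fourier (-1) x = starRingEnd ℂ (fourier 1 x) := fourier_neg
    simp only [complexify_apply, onePlusCos_apply, Complex.re_eq_add_conj, ContinuousMap.add_apply,
      ContinuousMap.smul_apply, ContinuousMap.one_apply, hneg, Complex.ofReal_add,
      Complex.ofReal_one, smul_eq_mul, div_eq_inv_mul, mul_one]
  rw [h]
  exact add_mem (one_mem_fejerRieszSubmodule 1) <| Submodule.smul_mem _ _ <| add_mem
    (fourier_mem_fejerRieszSubmodule (by simp)) (fourier_mem_fejerRieszSubmodule (by simp))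

theorem integral_onePlusCos_pow_pos (n : ℕ) : 0 < ∫ t, onePlusCos t ^ n ∂haarAddCircle :=
  (onePlusCos.continuous.pow n).integral_pos_of_hasCompactSupport_nonneg_nonzero (x := 0)
    (.of_compactSpace _) (fun x => pow_nonneg (onePlusCos_nonneg x) n) (by simp [onePlusCos_zero])

/-- The de la Vallée-Poussin kernel: the function `(1 + cos x) ^ n`, normalized to have integral
`1` with respect to the Haar probability measure. -/
noncomputable def deLaValleePoussinKernel (n : ℕ) : C(𝕋, ℝ) :=
  (∫ t, onePlusCos t ^ n ∂haarAddCircle)⁻¹ • onePlusCos ^ n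

theorem deLaValleePoussinKernel_nonneg (n : ℕ) (x : 𝕋) : 0 ≤ deLaValleePoussinKernel n x :=
  mul_nonneg (inv_pos.2 (integral_onePlusCos_pow_pos n)).le (pow_nonneg (onePlusCos_nonneg x) n)

theorem integral_deLaValleePoussinKernel (n : ℕ) :
    ∫ t, deLaValleePoussinKernel n t ∂haarAddCircle = 1 := by
  simp_rw [deLaValleePoussinKernel, ContinuousMap.smul_apply, ContinuousMap.pow_apply, smul_eq_mul]
  rw [integral_const_mul, inv_mul_cancel₀ (integral_onePlusCos_pow_pos n).ne']

theorem complexify_deLaValleePoussinKernel_mem (n : ℕ) :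
    complexify (deLaValleePoussinKernel n) ∈ fejerRieszSubmodule (n + 1) := by
  rw [deLaValleePoussinKernel, map_smul, map_pow]
  exact Submodule.smul_of_tower_mem _ _ (pow_mem_fejerRieszSubmodule complexify_onePlusCos_mem n)

/-- The probability measure on the circle whose density is the de la Vallée-Poussin kernel. -/
noncomputable def deLaValleePoussinMeasure (n : ℕ) : Measure 𝕋 :=
  haarAddCircle.withDensity fun t => ENNReal.ofReal (deLaValleePoussinKernel n t)

theorem integral_deLaValleePoussinMeasure {E : Type*} [NormedAddCommGroup E] [NormedSpace ℝ E]
    (n : ℕ) (f : 𝕋 → E) : ∫ t, f t ∂deLaValleePoussinMeasure n =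
      ∫ t, deLaValleePoussinKernel n t • f t ∂haarAddCircle := by
  rw [deLaValleePoussinMeasure, integral_withDensity_eq_integral_toReal_smul (by fun_prop)
    (by simp)]
  simp_rw [ENNReal.toReal_ofReal (deLaValleePoussinKernel_nonneg n _)]

instance (n : ℕ) : IsProbabilityMeasure (deLaValleePoussinMeasure n) := by
  constructor
  rw [deLaValleePoussinMeasure, withDensity_apply _ .univ, setLIntegral_univ,
    ← ofReal_integral_eq_lintegral_ofReal
      (integrable_of_continuous (deLaValleePoussinKernel n).continuous _)
      (.of_forall (deLaValleePoussinKernel_nonneg n)),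
    integral_deLaValleePoussinKernel, ENNReal.ofReal_one]

theorem tendsto_integral_norm_deLaValleePoussinMeasure :
    Tendsto (fun n => ∫ t, ‖t‖ ∂deLaValleePoussinMeasure n) atTop (𝓝 0) := by
  have := tendsto_setIntegral_pow_smul_of_unique_maximum_of_isCompact_of_continuousOn
    (μ := haarAddCircle) (c := onePlusCos) (g := fun x : 𝕋 => ‖x‖) isCompact_univ
    onePlusCos.continuous.continuousOn (fun _ _ => onePlusCos_lt_onePlusCos_zero)
    (fun x _ => onePlusCos_nonneg x) (by simp [onePlusCos_zero]) (by simp)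
    continuous_norm.continuousOn
  simpa [integral_deLaValleePoussinMeasure, deLaValleePoussinKernel, mul_assoc,
    integral_const_mul] using! this

theorem exists_mem_fejerRieszSubmodule_integral_deLaValleePoussinMeasure (n : ℕ) {f : 𝕋 → ℂ}
    (hf : Continuous f) : ∃ a ∈ fejerRieszSubmodule (n + 1),
      ∀ x, a x = ∫ t, f (x - t) ∂deLaValleePoussinMeasure n := by
  obtain ⟨a, ha, hconv⟩ := exists_mem_fejerRieszSubmodule_convolution
    (complexify_deLaValleePoussinKernel_mem n) hf haarAddCircle
  refine ⟨a, ha, fun x => ?_⟩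
  rw [hconv, integral_deLaValleePoussinMeasure, ← integral_sub_left_eq_self _ _ x]
  simp_rw [sub_sub_cancel, complexify_apply, Complex.real_smul]

theorem exists_mem_fejerRieszSubmodule_norm_sub_le (n : ℕ) {f : 𝕋 → ℂ} (hf : LipschitzWith 1 f) :
    ∃ a ∈ fejerRieszSubmodule (n + 1), LipschitzWith 1 a ∧
      ∀ x, ‖a x - f x‖ ≤ ∫ t, ‖t‖ ∂deLaValleePoussinMeasure n := by
  obtain ⟨a, ha, hconv⟩ :=
    exists_mem_fejerRieszSubmodule_integral_deLaValleePoussinMeasure n hf.continuous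
  refine ⟨a, ha, ?_, fun x => ?_⟩
  · rw [funext hconv]
    exact lipschitzWith_integral_comp_sub hf _
  · simpa [hconv] using norm_integral_comp_sub_sub_le hf (deLaValleePoussinMeasure n) x

end DeLaValleePoussin

section KantorovichMetric

variable {μ ν : ProbabilityMeasure 𝕋}

theorem kantorovichDist_le_iff {C : ℝ} : kantorovichDist μ ν ≤ C ↔
    ∀ f : 𝕋 → ℝ, LipschitzWith 1 f →
      |(∫ x, f x ∂(μ : Measure 𝕋)) - ∫ x, f x ∂(ν : Measure 𝕋)| ≤ C := by
  rw [kantorovichDist, csSup_le_iff]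
  · exact ⟨fun h f hf => h _ ⟨f, hf, rfl⟩, by rintro h _ ⟨f, hf, rfl⟩; exact h f hf⟩
  · exact ⟨_, by rintro _ ⟨f, hf, rfl⟩; exact norm_integral_sub_integral_le_of_lipschitzWith hf μ ν⟩
  · exact ⟨_, 0, .const' 0, rfl⟩

theorem norm_integral_sub_integral_le_kantorovichDist {E : Type*} [NormedAddCommGroup E]
    [NormedSpace ℝ E] [CompleteSpace E] {f : 𝕋 → E} (hf : LipschitzWith 1 f) :
    ‖(∫ x, f x ∂(μ : Measure 𝕋)) - ∫ x, f x ∂(ν : Measure 𝕋)‖ ≤ kantorovichDist μ ν := by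
  obtain ⟨g, hg, hgv⟩ := exists_dual_vector'' ℝ
    ((∫ x, f x ∂(μ : Measure 𝕋)) - ∫ x, f x ∂(ν : Measure 𝕋))
  have hgf : LipschitzWith 1 fun x => g (f x) :=
    ((g.lipschitz.weaken hg).comp hf).weaken (mul_one 1).le
  calc ‖(∫ x, f x ∂(μ : Measure 𝕋)) - ∫ x, f x ∂(ν : Measure 𝕋)‖
      = g ((∫ x, f x ∂(μ : Measure 𝕋)) - ∫ x, f x ∂(ν : Measure 𝕋)) := hgv.symm
    _ = (∫ x, g (f x) ∂(μ : Measure 𝕋)) - ∫ x, g (f x) ∂(ν : Measure 𝕋) := by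
        rw [map_sub, g.integral_comp_comm (integrable_of_continuous hf.continuous _),
          g.integral_comp_comm (integrable_of_continuous hf.continuous _)]
    _ ≤ |(∫ x, g (f x) ∂(μ : Measure 𝕋)) - ∫ x, g (f x) ∂(ν : Measure 𝕋)| := le_abs_self _
    _ ≤ kantorovichDist μ ν := kantorovichDist_le_iff.1 le_rfl _ hgf

theorem kantorovichDist_nonneg : 0 ≤ kantorovichDist μ ν :=
  (norm_nonneg _).trans (norm_integral_sub_integral_le_kantorovichDist (.const' (0 : ℝ)))

/-- The Kantorovich distance as a metric on the probability measures on the circle, with the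
topology it generates rather than the given weak one. -/
noncomputable abbrev kantorovichMetricSpace : MetricSpace (ProbabilityMeasure 𝕋) where
  dist := kantorovichDist
  dist_self μ := le_antisymm (kantorovichDist_le_iff.2 fun f _ => by simp) kantorovichDist_nonneg
  dist_comm μ ν := by simp_rw [kantorovichDist, abs_sub_comm]
  dist_triangle μ ν ρ := kantorovichDist_le_iff.2 fun f hf =>
    (abs_sub_le _ (∫ x, f x ∂(ν : Measure 𝕋)) _).trans <|
      add_le_add (norm_integral_sub_integral_le_kantorovichDist hf)
        (norm_integral_sub_integral_le_kantorovichDist hf)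
  eq_of_dist_eq_zero h := probabilityMeasure_ext_of_lipschitzWith_one fun _ hf =>
    sub_eq_zero.1 <| abs_nonpos_iff.1 <| kantorovichDist_le_iff.1 (le_of_eq h) _ hf

theorem tendsto_kantorovichDist (μ : ProbabilityMeasure 𝕋) :
    Tendsto (fun ν => kantorovichDist ν μ) (𝓝 μ) (𝓝 0) := by
  refine tendsto_order.2 ⟨fun r hr => .of_forall fun ν => hr.trans_le kantorovichDist_nonneg,
    fun ε hε => ?_⟩
  filter_upwards [eventually_forall_lipschitzWith_abs_integral_sub_lt 1 μ (half_pos hε)] with ν hν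
  exact (kantorovichDist_le_iff.2 fun f hf => (hν f hf).le).trans_lt (half_lt_self hε)

theorem topologicalSpace_eq_kantorovichMetricSpace :
    (inferInstance : TopologicalSpace (ProbabilityMeasure 𝕋)) =
      kantorovichMetricSpace.toUniformSpace.toTopologicalSpace :=
  (@eq_induced_of_injective_of_tendsto_dist _ _ _ _ kantorovichMetricSpace id
    Function.injective_id tendsto_kantorovichDist).trans
      (@induced_id _ kantorovichMetricSpace.toUniformSpace.toTopologicalSpace)

noncomputable instance instMetricSpaceProbabilityMeasure : MetricSpace (ProbabilityMeasure 𝕋) :=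
  kantorovichMetricSpace.replaceTopology topologicalSpace_eq_kantorovichMetricSpace

theorem dist_eq_kantorovichDist (μ ν : ProbabilityMeasure 𝕋) : dist μ ν = kantorovichDist μ ν := rfl

end KantorovichMetric

namespace FejerRieszState

variable {n : ℕ} {φ ψ : FejerRieszState n}

/-- The state of `𝒫_{n+1}` given by integration against a probability measure. -/
noncomputable def ofMeasure (n : ℕ) (μ : ProbabilityMeasure 𝕋) : FejerRieszState n :=
  ⟨{toFun a := ∫ x, (a : C(𝕋, ℂ)) x ∂(μ : Measure 𝕋)
    map_add' a b := integral_add (integrable_of_continuous (by fun_prop) _)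
      (integrable_of_continuous (by fun_prop) _)
    map_smul' c a := integral_smul c _},
    by simp [fejerRieszOne], fun _ ha => integral_nonneg ha⟩

theorem ofMeasure_surjective (n : ℕ) : Function.Surjective (ofMeasure n) := fun φ => by
  obtain ⟨μ, hμ⟩ := exists_probabilityMeasure_forall_mem_integral_eq
    (one_mem_fejerRieszSubmodule n) (fun _ => star_mem_fejerRieszSubmodule) φ.2.1 φ.2.2
  exact ⟨μ, Subtype.ext (LinearMap.ext hμ)⟩

theorem fejerRieszStateDist_le_iff {C : ℝ} : fejerRieszStateDist n φ ψ ≤ C ↔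
    ∀ a : fejerRieszSubmodule (n + 1), LipschitzWith 1 (a : C(𝕋, ℂ)) → ‖φ.1 a - ψ.1 a‖ ≤ C := by
  simp_rw [fejerRieszStateDist, trigLipSeminorm_le_one_iff]
  rw [csSup_le_iff]
  · exact ⟨fun h a ha => h _ ⟨a, ha, rfl⟩, by rintro h _ ⟨a, ha, rfl⟩; exact h a ha⟩
  · obtain ⟨μ, rfl⟩ := ofMeasure_surjective n φ
    obtain ⟨ν, rfl⟩ := ofMeasure_surjective n ψ
    exact ⟨_, by rintro _ ⟨a, ha, rfl⟩; exact norm_integral_sub_integral_le_kantorovichDist ha⟩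
  · exact ⟨_, 0, .const' 0, rfl⟩

theorem norm_apply_sub_apply_le_fejerRieszStateDist {a : fejerRieszSubmodule (n + 1)}
    (ha : LipschitzWith 1 (a : C(𝕋, ℂ))) : ‖φ.1 a - ψ.1 a‖ ≤ fejerRieszStateDist n φ ψ :=
  fejerRieszStateDist_le_iff.1 le_rfl a ha

theorem eq_of_fejerRieszStateDist_eq_zero (h : fejerRieszStateDist n φ ψ = 0) : φ = ψ := by
  refine Subtype.ext (LinearMap.ext fun a => ?_)
  obtain ⟨K, hK⟩ := exists_lipschitzWith_of_mem_fejerRieszSubmodule a.2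
  obtain ⟨c, hc, hca⟩ := exists_lipschitzWith_one_const_smul ℂ hK
  have : ‖φ.1 (c • a) - ψ.1 (c • a)‖ ≤ 0 :=
    h ▸ norm_apply_sub_apply_le_fejerRieszStateDist hca
  simpa [← smul_sub, hc, sub_eq_zero] using this

noncomputable instance : MetricSpace (FejerRieszState n) where
  dist := fejerRieszStateDist n
  dist_self φ := le_antisymm (fejerRieszStateDist_le_iff.2 fun a _ => by simp)
    ((norm_nonneg _).trans (norm_apply_sub_apply_le_fejerRieszStateDist (a := 0) (.const' 0)))
  dist_comm φ ψ := by simp_rw [fejerRieszStateDist, norm_sub_rev]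
  dist_triangle φ ψ χ := fejerRieszStateDist_le_iff.2 fun a ha =>
    (norm_sub_le_norm_sub_add_norm_sub _ (ψ.1 a) _).trans <|
      add_le_add (norm_apply_sub_apply_le_fejerRieszStateDist ha)
        (norm_apply_sub_apply_le_fejerRieszStateDist ha)
  eq_of_dist_eq_zero := eq_of_fejerRieszStateDist_eq_zero

theorem dist_eq_fejerRieszStateDist (φ ψ : FejerRieszState n) :
    dist φ ψ = fejerRieszStateDist n φ ψ := rfl

theorem lipschitzWith_ofMeasure (n : ℕ) : LipschitzWith 1 (ofMeasure n) :=
  .of_dist_le_mul fun μ ν => by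
    rw [NNReal.coe_one, one_mul]
    exact fejerRieszStateDist_le_iff.2 fun _ ha => norm_integral_sub_integral_le_kantorovichDist ha

instance : CompactSpace (FejerRieszState n) :=
  (ofMeasure_surjective n).compactSpace (lipschitzWith_ofMeasure n).continuous

instance : Nonempty (FejerRieszState n) := ⟨ofMeasure n default⟩

theorem dist_le_dist_ofMeasure_add (n : ℕ) (μ ν : ProbabilityMeasure 𝕋) :
    dist μ ν ≤ dist (ofMeasure n μ) (ofMeasure n ν) +
      2 * ∫ t, ‖t‖ ∂deLaValleePoussinMeasure n := by
  refine kantorovichDist_le_iff.2 fun f hf => ?_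
  obtain ⟨a, ha, hlip, hclose⟩ := exists_mem_fejerRieszSubmodule_norm_sub_le n
    (f := fun x => (f x : ℂ)) (Complex.isometry_ofReal.lipschitz.comp hf |>.weaken (by simp))
  have key (ρ : ProbabilityMeasure 𝕋) : ‖(ofMeasure n ρ).1 ⟨a, ha⟩ -
      ∫ x, (f x : ℂ) ∂(ρ : Measure 𝕋)‖ ≤ ∫ t, ‖t‖ ∂deLaValleePoussinMeasure n :=
    norm_integral_sub_integral_le a.continuous (Complex.continuous_ofReal.comp hf.continuous) _
      hclose
  rw [← Real.norm_eq_abs, ← Complex.norm_real, Complex.ofReal_sub,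
    ← integral_complex_ofReal, ← integral_complex_ofReal, ← dist_eq_norm]
  calc dist (∫ x, (f x : ℂ) ∂(μ : Measure 𝕋)) (∫ x, (f x : ℂ) ∂(ν : Measure 𝕋))
      ≤ dist (∫ x, (f x : ℂ) ∂(μ : Measure 𝕋)) ((ofMeasure n μ).1 ⟨a, ha⟩) +
          dist ((ofMeasure n μ).1 ⟨a, ha⟩) ((ofMeasure n ν).1 ⟨a, ha⟩) +
          dist ((ofMeasure n ν).1 ⟨a, ha⟩) (∫ x, (f x : ℂ) ∂(ν : Measure 𝕋)) := dist_triangle4 ..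
    _ ≤ (∫ t, ‖t‖ ∂deLaValleePoussinMeasure n) + dist (ofMeasure n μ) (ofMeasure n ν) +
          ∫ t, ‖t‖ ∂deLaValleePoussinMeasure n := by
        rw [dist_comm (∫ x, (f x : ℂ) ∂(μ : Measure 𝕋)), dist_eq_norm, dist_eq_norm, dist_eq_norm]
        exact add_le_add_three (key μ) (norm_apply_sub_apply_le_fejerRieszStateDist hlip) (key ν)
    _ = dist (ofMeasure n μ) (ofMeasure n ν) + 2 * ∫ t, ‖t‖ ∂deLaValleePoussinMeasure n := by ring

end FejerRieszState

/-- Proposition 3.9: each state space `(S(𝒫_n), d_n)` (for `n ≥ 1`) is a nonempty compact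
metric space, and it converges in Gromov–Hausdorff distance to the space of Borel
probability measures on the circle with the Kantorovich distance as `n → ∞`. -/
theorem fejerRieszStates_GH_converge :
    ∃ (instT : ∀ n : ℕ, MetricSpace (FejerRieszState n))
      (instP : MetricSpace (ProbabilityMeasure (AddCircle (2 * Real.pi))))
      (hneT : ∀ n : ℕ, Nonempty (FejerRieszState n))
      (hneP : Nonempty (ProbabilityMeasure (AddCircle (2 * Real.pi))))
      (hcT : ∀ n : ℕ, @CompactSpace (FejerRieszState n)
        (instT n).toUniformSpace.toTopologicalSpace)
      (hcP : @CompactSpace (ProbabilityMeasure (AddCircle (2 * Real.pi)))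
        instP.toUniformSpace.toTopologicalSpace),
      (∀ (n : ℕ) (φ ψ : FejerRieszState n),
        @dist _ (instT n).toDist φ ψ = fejerRieszStateDist n φ ψ) ∧
      (∀ μ ν : ProbabilityMeasure (AddCircle (2 * Real.pi)),
        @dist _ instP.toDist μ ν = kantorovichDist μ ν) ∧
      Tendsto (fun n : ℕ =>
          @GromovHausdorff.ghDist (FejerRieszState n)
            (ProbabilityMeasure (AddCircle (2 * Real.pi)))
            (instT n) (hneT n) (hcT n) instP hneP hcP)
        atTop (nhds 0) := by
  refine ⟨fun n => inferInstance, inferInstance, fun n => inferInstance, inferInstance,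
    fun n => inferInstance, inferInstance, fun n => FejerRieszState.dist_eq_fejerRieszStateDist,
    dist_eq_kantorovichDist, ?_⟩
  refine squeeze_zero (fun n => dist_nonneg) (fun n => ?_)
    tendsto_integral_norm_deLaValleePoussinMeasure
  have hghDist := ghDist_le_half_of_surjective (FejerRieszState.ofMeasure_surjective n)
    (δ := 2 * ∫ t, ‖t‖ ∂deLaValleePoussinMeasure n) fun μ ν => by
      have hle : dist (FejerRieszState.ofMeasure n μ) (FejerRieszState.ofMeasure n ν) ≤ dist μ ν :=
        by simpa using (FejerRieszState.lipschitzWith_ofMeasure n).dist_le_mul μ ν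
      rw [abs_of_nonneg (sub_nonneg.2 hle), sub_le_iff_le_add']
      exact FejerRieszState.dist_le_dist_ofMeasure_add n μ ν
  rwa [mul_div_cancel_left₀ _ two_ne_zero] at hghDist
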